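/- (Action on off-shell Bethe states) For every N ≥ 2, every m ≥ 0 and arbitrary λ₁,…,λ_m ∈ ℂ: Q^(N) ℬ^(N)(λ₁) ℬ^(N)(λ₂) ⋯ ℬ^(N)(λ_m) Ω^(N) = (−1)^N (∏_{i=1}^m d(λᵢ)²) · ℬ^(N−1)(λ₁) ℬ^(N−1)(λ₂) ⋯ ℬ^(N−1)(λ_m) ℬ^(N−1)(η) Ω^(N−1). In particular, if λᵢ = η for some i then the left-hand side vanishes. -/

import Mathlib

noncomputable section
open Complex Matrix

/-- Spin configurations of a chain of `N` sites: `true` encodes `v₊`, `false` encodes `v₋`.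
The site with label `i ∈ {1,…,N}` corresponds to the index `i-1 : Fin N`
(so the leftmost site `N` is the index `N-1`). -/
abbrev Conf (N : ℕ) := Fin N → Bool

/-- The combinatorial-point parameter `η = 2πi/3`. -/
def ηc : ℂ := 2 * (Real.pi : ℂ) * Complex.I / 3

/-- `a(u) = sinh(u+η)/sinh η`. -/
def aF (u : ℂ) : ℂ := Complex.sinh (u + ηc) / Complex.sinh ηc
/-- `b(u) = sinh(u)/sinh η`. -/
def bF (u : ℂ) : ℂ := Complex.sinh u / Complex.sinh ηc
/-- `c(u) = 1`. -/
def cF (_ : ℂ) : ℂ := 1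
/-- `d(u) = sinh(u-η)/sinh η`. -/
def dF (u : ℂ) : ℂ := Complex.sinh (u - ηc) / Complex.sinh ηc
/-- The R-matrix `R(u)` on `V⊗V` in the ordered basis `(v₊⊗v₊, v₊⊗v₋, v₋⊗v₊, v₋⊗v₋)`:
`[[a,0,0,0],[0,b,c,0],[0,c,b,0],[0,0,0,a]]`. -/
def Rm (u : ℂ) : Matrix (Bool × Bool) (Bool × Bool) ℂ :=
  Matrix.of fun o i =>
    if o = i then (if o.1 = o.2 then aF u else bF u)
    else if o.1 = i.2 ∧ o.2 = i.1 ∧ o.1 ≠ o.2 then cF u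
    else 0

/-- The boundary K-matrix `K⁻(u) = diag(d(u), -a(u))` in the basis `(v₊, v₋)`. -/
def Km (u : ℂ) : Matrix Bool Bool ℂ :=
  Matrix.of fun o i => if o = i then (if o then dF u else -aF u) else 0

/-- `R₀ᵢ(u)`: the matrix `R(u)` applied to `V₀ ⊗ Vᵢ` (auxiliary space first), identity
elsewhere, on `V₀ ⊗ V^⊗N`; here the site with label `i` is the index `i-1`. -/
def R0i (N : ℕ) (u : ℂ) (i : Fin N) :
    Matrix (Bool × Conf N) (Bool × Conf N) ℂ :=
  Matrix.of fun x y =>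
    if ∀ j, j ≠ i → x.2 j = y.2 j then Rm u (x.1, x.2 i) (y.1, y.2 i) else 0

/-- `Rᵢ₀(u)`: the matrix `R(u)` applied to `Vᵢ ⊗ V₀` (auxiliary space second), identity
elsewhere, on `V₀ ⊗ V^⊗N`. -/
def Ri0 (N : ℕ) (u : ℂ) (i : Fin N) :
    Matrix (Bool × Conf N) (Bool × Conf N) ℂ :=
  Matrix.of fun x y =>
    if ∀ j, j ≠ i → x.2 j = y.2 j then Rm u (x.2 i, x.1) (y.2 i, y.1) else 0

/-- `T^(N)(u) = R₀₁(u) R₀₂(u) ⋯ R₀N(u)`. -/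
def Tmono (N : ℕ) (u : ℂ) : Matrix (Bool × Conf N) (Bool × Conf N) ℂ :=
  (List.ofFn fun i : Fin N => R0i N u i).prod

/-- `T̄^(N)(u) = R_{N0}(u) ⋯ R_{20}(u) R_{10}(u)`. -/
def Tbar (N : ℕ) (u : ℂ) : Matrix (Bool × Conf N) (Bool × Conf N) ℂ :=
  (List.ofFn fun i : Fin N => Ri0 N u i).reverse.prod

/-- `K₀⁻(u)`: the matrix `K⁻(u)` acting on the auxiliary space `V₀`, identity on `V^⊗N`. -/
def K0m (N : ℕ) (u : ℂ) : Matrix (Bool × Conf N) (Bool × Conf N) ℂ :=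
  Matrix.of fun x y => if x.2 = y.2 then Km u x.1 y.1 else 0

/-- The double-row monodromy matrix `U^(N)(u) = T̄^(N)(u) K₀⁻(u) T^(N)(u)`. -/
def Umono (N : ℕ) (u : ℂ) : Matrix (Bool × Conf N) (Bool × Conf N) ℂ :=
  Tbar N u * K0m N u * Tmono N u

/-- `𝒜^(N)(u)`: the `(v₊, v₊)` auxiliary-space block of `U^(N)(u)`. -/
def Aop (N : ℕ) (u : ℂ) : Matrix (Conf N) (Conf N) ℂ :=
  Matrix.of fun s t => Umono N u (true, s) (true, t)
/-- `ℬ^(N)(u)`: the `(v₊, v₋)` auxiliary-space block of `U^(N)(u)`. -/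
def Bop (N : ℕ) (u : ℂ) : Matrix (Conf N) (Conf N) ℂ :=
  Matrix.of fun s t => Umono N u (true, s) (false, t)
/-- `𝒞^(N)(u)`: the `(v₋, v₊)` auxiliary-space block of `U^(N)(u)`. -/
def Cop (N : ℕ) (u : ℂ) : Matrix (Conf N) (Conf N) ℂ :=
  Matrix.of fun s t => Umono N u (false, s) (true, t)
/-- `𝒟^(N)(u)`: the `(v₋, v₋)` auxiliary-space block of `U^(N)(u)`. -/
def Dop (N : ℕ) (u : ℂ) : Matrix (Conf N) (Conf N) ℂ :=
  Matrix.of fun s t => Umono N u (false, s) (false, t)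

/-- The transfer matrix
`t^(N)(u) = (sinh u / sinh η) 𝒜^(N)(u) - (sinh(u+2η)/sinh η) 𝒟^(N)(u)`. -/
def tOp (N : ℕ) (u : ℂ) : Matrix (Conf N) (Conf N) ℂ :=
  (Complex.sinh u / Complex.sinh ηc) • Aop N u
    - (Complex.sinh (u + 2 * ηc) / Complex.sinh ηc) • Dop N u

/-- The pseudovacuum `Ω^(N) = v₊ ⊗ ⋯ ⊗ v₊`. -/
def Omega (N : ℕ) : Conf N → ℂ := fun s => if ∀ j, s j = true then 1 else 0

/-- `E^ε ⊗ X : V^⊗(n+2) → V^⊗(n+1)`: the linear functional `E^ε : V → ℂ`, `v_ε ↦ 1`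
(zero on the other basis vector), applied to the leftmost site `N = n+2`, tensored with
the operator `X` on the remaining sites `n+1,…,1`.  Here `e = true` encodes `ε = +`. -/
def Etens (n : ℕ) (e : Bool) (X : Matrix (Conf (n + 1)) (Conf (n + 1)) ℂ) :
    Matrix (Conf (n + 1)) (Conf (n + 2)) ℂ :=
  Matrix.of fun o i =>
    (if i (Fin.last (n + 1)) = e then 1 else 0) * X o (fun j => i (Fin.castSucc j))

/-- `F ⊗ X` : the one-site operator `F` applied to the leftmost site `N+1` of a chain of
`N+1` sites, tensored with the operator `X` on the remaining sites `N,…,1`. -/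
def siteTens (N : ℕ) (F : Matrix Bool Bool ℂ) (X : Matrix (Conf N) (Conf N) ℂ) :
    Matrix (Conf (N + 1)) (Conf (N + 1)) ℂ :=
  Matrix.of fun o i =>
    F (o (Fin.last N)) (i (Fin.last N)) * X (fun j => o (Fin.castSucc j)) (fun j => i (Fin.castSucc j))

/-- `E^ε_{ε'} : V → V` sends `v_ε ↦ v_{ε'}` and the other basis vector to `0`
(`true` encodes `+`). -/
def Eop (e e' : Bool) : Matrix Bool Bool ℂ :=
  Matrix.of fun o i => if i = e ∧ o = e' then 1 else 0
/-- The local SUSY generator `q_{i,i+1}` (with `i = k+1`) on a chain of `n+2` sites: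
it applies `q : V⊗V → V`, `q(v₊⊗v₊) = v₋` (zero on the other basis vectors), to the
adjacent sites `i, i+1` (merging them into the single site `i` of the output chain of
`n+1` sites) and the identity to all other sites. -/
def qMerge (n : ℕ) (k : Fin (n + 1)) : Matrix (Conf (n + 1)) (Conf (n + 2)) ℂ :=
  Matrix.of fun o i =>
    if i (Fin.castSucc k) = true ∧ i (Fin.succ k) = true ∧ o k = false ∧
        (∀ j : Fin (n + 1),
          ((j : ℕ) < (k : ℕ) → o j = i (Fin.castSucc j)) ∧
          ((k : ℕ) < (j : ℕ) → o j = i (Fin.succ j)))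
    then 1 else 0

/-- The SUSY operator `Q^(N)` for `N = n+2`:
`Q^(N) = ∑_{i=1}^{N-1} (-1)^{i+1} q_{i,i+1} : V^⊗N → V^⊗(N-1)`. -/
def Qop (n : ℕ) : Matrix (Conf (n + 1)) (Conf (n + 2)) ℂ :=
  ∑ k : Fin (n + 1), ((-1 : ℂ) ^ (k : ℕ)) • qMerge n k

/-- The local operator `q†_i` (with `i = k+1`) on a chain of `n+1` sites: it applies
`q† : V → V⊗V`, `q†(v₋) = v₊⊗v₊`, `q†(v₊) = 0`, to site `i` (splitting it into the two
adjacent sites `i, i+1` of the output chain of `n+2` sites) and the identity elsewhere. -/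
def qSplit (n : ℕ) (k : Fin (n + 1)) : Matrix (Conf (n + 2)) (Conf (n + 1)) ℂ :=
  Matrix.of fun o i =>
    if o (Fin.castSucc k) = true ∧ o (Fin.succ k) = true ∧ i k = false ∧
        (∀ j : Fin (n + 1),
          ((j : ℕ) < (k : ℕ) → i j = o (Fin.castSucc j)) ∧
          ((k : ℕ) < (j : ℕ) → i j = o (Fin.succ j)))
    then 1 else 0

/-- The adjoint SUSY operator `Q^(N)†` for `N = n+2`:
`Q^(N)† = ∑_{i=1}^{N-1} (-1)^{i+1} q†_i : V^⊗(N-1) → V^⊗N`. -/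
def Qdag (n : ℕ) : Matrix (Conf (n + 2)) (Conf (n + 1)) ℂ :=
  ∑ k : Fin (n + 1), ((-1 : ℂ) ^ (k : ℕ)) • qSplit n k

/-- Append a new leftmost site. -/
def sn {N : ℕ} (s : Conf N) (b : Bool) : Conf (N + 1) := Fin.snoc (α := fun _ => Bool) s b

theorem sn_last {N : ℕ} (s : Conf N) (b : Bool) : sn s b (Fin.last N) = b := by simp [sn]
theorem sn_castSucc {N : ℕ} (s : Conf N) (b : Bool) (j : Fin N) :
    sn s b (Fin.castSucc j) = s j := by simp [sn]
theorem sn_succ_castSucc {N : ℕ} (s : Conf (N + 1)) (b : Bool) (j : Fin N) :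
    sn s b (Fin.succ (Fin.castSucc j)) = s (Fin.succ j) := by
  rw [Fin.succ_castSucc, sn_castSucc]
theorem sn_surj {N : ℕ} (s : Conf (N + 1)) : ∃ t b, s = sn t b :=
  ⟨Fin.init s, s (Fin.last N), by simp [sn]⟩

theorem sum_sn {N : ℕ} {M : Type*} [AddCommMonoid M] (f : Conf (N + 1) → M) :
    ∑ s, f s = ∑ b : Bool, ∑ t : Conf N, f (sn t b) := by
  rw [← (Fin.snocEquiv (fun _ : Fin (N + 1) => Bool)).sum_comp, Fintype.sum_prod_type]
  rfl

/-- Block of a matrix with respect to the leftmost sites. -/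
def blk {m n : ℕ} (M : Matrix (Conf (m + 1)) (Conf (n + 1)) ℂ) (o i : Bool) :
    Matrix (Conf m) (Conf n) ℂ := Matrix.of fun s t => M (sn s o) (sn t i)

theorem blk_ext {m n : ℕ} {M M' : Matrix (Conf (m + 1)) (Conf (n + 1)) ℂ}
    (h : ∀ o i, blk M o i = blk M' o i) : M = M' := by
  ext s t
  obtain ⟨s, o, rfl⟩ := sn_surj s
  obtain ⟨t, i, rfl⟩ := sn_surj t
  exact congrFun (congrFun (h o i) s) t

theorem blk_mul {l m n : ℕ} (M : Matrix (Conf (l + 1)) (Conf (m + 1)) ℂ)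
    (M' : Matrix (Conf (m + 1)) (Conf (n + 1)) ℂ) (o i : Bool) :
    blk (M * M') o i = blk M o true * blk M' true i + blk M o false * blk M' false i := by
  ext s t
  simp [blk, Matrix.mul_apply, sum_sn]

theorem blk_add {m n : ℕ} (M M' : Matrix (Conf (m + 1)) (Conf (n + 1)) ℂ) (o i : Bool) :
    blk (M + M') o i = blk M o i + blk M' o i := rfl

theorem blk_smul {m n : ℕ} (c : ℂ) (M : Matrix (Conf (m + 1)) (Conf (n + 1)) ℂ) (o i : Bool) :
    blk (c • M) o i = c • blk M o i := rfl

theorem forall_ne_last {N : ℕ} (s t : Conf N) (o i : Bool) :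
    (∀ j, j ≠ Fin.last N → sn s o j = sn t i j) ↔ s = t := by
  constructor
  · intro h
    funext j
    simpa [sn_castSucc] using h (Fin.castSucc j) (Fin.castSucc_ne_last j)
  · rintro rfl j hj
    obtain ⟨j, rfl⟩ := Fin.exists_castSucc_eq.2 hj
    simp [sn_castSucc]

theorem forall_ne_castSucc {N : ℕ} (s t : Conf N) (o i : Bool) (k : Fin N) :
    (∀ j, j ≠ Fin.castSucc k → sn s o j = sn t i j) ↔ (o = i ∧ ∀ j, j ≠ k → s j = t j) := by
  constructor
  · intro h
    refine ⟨by simpa [sn_last] using h (Fin.last N) (Fin.castSucc_ne_last k).symm, fun j hj => ?_⟩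
    simpa [sn_castSucc] using h (Fin.castSucc j) (by simpa using hj)
  · rintro ⟨rfl, h⟩ j hj
    induction j using Fin.lastCases with
    | last => simp [sn_last]
    | cast j => simpa [sn_castSucc] using h j (by simpa using hj)

/-- Block of a matrix that includes the auxiliary space. -/
def blq {N : ℕ} (M : Matrix (Bool × Conf (N + 1)) (Bool × Conf (N + 1)) ℂ) (α o β i : Bool) :
    Matrix (Conf N) (Conf N) ℂ := Matrix.of fun s t => M (α, sn s o) (β, sn t i)

/-- Auxiliary-space block. -/
def bla {N : ℕ} (M : Matrix (Bool × Conf N) (Bool × Conf N) ℂ) (α β : Bool) :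
    Matrix (Conf N) (Conf N) ℂ := Matrix.of fun s t => M (α, s) (β, t)

theorem blq_ext {N : ℕ} {M M' : Matrix (Bool × Conf (N + 1)) (Bool × Conf (N + 1)) ℂ}
    (h : ∀ α o β i, blq M α o β i = blq M' α o β i) : M = M' := by
  ext ⟨α, s⟩ ⟨β, t⟩
  obtain ⟨s, o, rfl⟩ := sn_surj s
  obtain ⟨t, i, rfl⟩ := sn_surj t
  exact congrFun (congrFun (h α o β i) s) t

theorem blq_mul {N : ℕ} (M M' : Matrix (Bool × Conf (N + 1)) (Bool × Conf (N + 1)) ℂ)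
    (α o β i : Bool) :
    blq (M * M') α o β i = ∑ γ, ∑ k, blq M α o γ k * blq M' γ k β i := by
  ext s t
  simp [blq, Matrix.mul_apply, sum_sn, Fintype.sum_prod_type]

theorem bla_mul {N : ℕ} (M M' : Matrix (Bool × Conf N) (Bool × Conf N) ℂ) (α β : Bool) :
    bla (M * M') α β = ∑ γ, bla M α γ * bla M' γ β := by
  ext s t
  simp [bla, Matrix.mul_apply, Fintype.sum_prod_type]

/-- Tensor with the identity on a new leftmost site. -/
def lft {N : ℕ} (M : Matrix (Bool × Conf N) (Bool × Conf N) ℂ) :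
    Matrix (Bool × Conf (N + 1)) (Bool × Conf (N + 1)) ℂ :=
  Matrix.of fun x y => if x.2 (Fin.last N) = y.2 (Fin.last N) then
    M (x.1, fun j => x.2 (Fin.castSucc j)) (y.1, fun j => y.2 (Fin.castSucc j)) else 0

theorem blq_lft {N : ℕ} (M : Matrix (Bool × Conf N) (Bool × Conf N) ℂ) (α o β i : Bool) :
    blq (lft M) α o β i = if o = i then bla M α β else 0 := by
  ext s t
  by_cases h : o = i <;> simp [blq, lft, bla, sn_last, sn_castSucc, h]

theorem lft_mul {N : ℕ} (M M' : Matrix (Bool × Conf N) (Bool × Conf N) ℂ) :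
    lft (M * M') = lft M * lft M' := by
  apply blq_ext
  intro α o β i
  rw [blq_mul]
  simp only [blq_lft, bla_mul]
  cases o <;> cases i <;> simp

theorem lft_one {N : ℕ} : lft (1 : Matrix (Bool × Conf N) (Bool × Conf N) ℂ) = 1 := by
  ext ⟨α, s⟩ ⟨β, t⟩
  obtain ⟨s, o, rfl⟩ := sn_surj s
  obtain ⟨t, i, rfl⟩ := sn_surj t
  have : sn s o = sn t i ↔ s = t ∧ o = i := by simp [sn]
  simp only [lft, Matrix.of_apply, Matrix.one_apply, sn_last, sn_castSucc, Prod.mk.injEq, this]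
  grind

theorem lft_prod {N : ℕ} (L : List (Matrix (Bool × Conf N) (Bool × Conf N) ℂ)) :
    lft L.prod = (L.map lft).prod := by
  induction L with
  | nil => simp [lft_one]
  | cons x L ih => simp [lft_mul, ih]

theorem R0i_castSucc (N : ℕ) (u : ℂ) (i : Fin N) :
    R0i (N + 1) u (Fin.castSucc i) = lft (R0i N u i) := by
  apply blq_ext
  intro α o β k
  ext s t
  rw [blq_lft]
  simp only [blq, R0i, Matrix.of_apply, forall_ne_castSucc, sn_castSucc]
  by_cases h : o = k <;> simp [h, bla]

theorem Ri0_castSucc (N : ℕ) (u : ℂ) (i : Fin N) :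
    Ri0 (N + 1) u (Fin.castSucc i) = lft (Ri0 N u i) := by
  apply blq_ext
  intro α o β k
  ext s t
  rw [blq_lft]
  simp only [blq, Ri0, Matrix.of_apply, forall_ne_castSucc, sn_castSucc]
  by_cases h : o = k <;> simp [h, bla]

theorem K0m_succ (N : ℕ) (u : ℂ) : K0m (N + 1) u = lft (K0m N u) := by
  apply blq_ext
  intro α o β k
  ext s t
  rw [blq_lft]
  have : sn s o = sn t k ↔ s = t ∧ o = k := by simp [sn]
  simp only [blq, K0m, Matrix.of_apply, this]
  by_cases h : o = k <;> simp [h, bla]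

theorem Umono_succ (N : ℕ) (u : ℂ) :
    Umono (N + 1) u = Ri0 (N + 1) u (Fin.last N) * lft (Umono N u) *
      R0i (N + 1) u (Fin.last N) := by
  have h1 : Tmono (N + 1) u = lft (Tmono N u) * R0i (N + 1) u (Fin.last N) := by
    rw [Tmono, Tmono, List.ofFn_succ', lft_prod, List.map_ofFn]
    simp [R0i_castSucc, Function.comp_def]
  have h2 : Tbar (N + 1) u = Ri0 (N + 1) u (Fin.last N) * lft (Tbar N u) := by
    rw [Tbar, Tbar, List.ofFn_succ', lft_prod, List.map_reverse, List.map_ofFn]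
    simp [Ri0_castSucc, Function.comp_def]
  rw [Umono, h1, h2, K0m_succ, Umono, lft_mul, lft_mul]
  simp only [Matrix.mul_assoc]

theorem blq_R0i_last (N : ℕ) (u : ℂ) (α o β i : Bool) :
    blq (R0i (N + 1) u (Fin.last N)) α o β i = Rm u (α, o) (β, i) • 1 := by
  ext s t
  simp [blq, R0i, forall_ne_last, sn_last, Matrix.one_apply]

theorem blq_Ri0_last (N : ℕ) (u : ℂ) (α o β i : Bool) :
    blq (Ri0 (N + 1) u (Fin.last N)) α o β i = Rm u (o, α) (i, β) • 1 := by
  ext s t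
  simp [blq, Ri0, forall_ne_last, sn_last, Matrix.one_apply]

theorem blk_U (N : ℕ) (u : ℂ) (α o β i : Bool) :
    blk (bla (Umono (N + 1) u) α β) o i = ∑ γ, ∑ k, ∑ δ,
      (Rm u (o, α) (k, γ) * Rm u (δ, k) (β, i)) • bla (Umono N u) γ δ := by
  change blq (Umono (N + 1) u) α o β i = _
  rw [Umono_succ, blq_mul]
  simp only [blq_mul, blq_R0i_last, blq_Ri0_last, blq_lft, Fintype.sum_bool]
  simp [smul_smul]
  module

theorem Aop_eq (N : ℕ) (u : ℂ) : Aop N u = bla (Umono N u) true true := rfl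
theorem Bop_eq (N : ℕ) (u : ℂ) : Bop N u = bla (Umono N u) true false := rfl
theorem Cop_eq (N : ℕ) (u : ℂ) : Cop N u = bla (Umono N u) false true := rfl
theorem Dop_eq (N : ℕ) (u : ℂ) : Dop N u = bla (Umono N u) false false := rfl

theorem blk_A (N : ℕ) (u : ℂ) :
    blk (Aop (N + 1) u) true true = (aF u ^ 2) • Aop N u ∧
    blk (Aop (N + 1) u) true false = aF u • Bop N u ∧
    blk (Aop (N + 1) u) false true = aF u • Cop N u ∧
    blk (Aop (N + 1) u) false false = (bF u ^ 2) • Aop N u + Dop N u := by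
  simp only [Aop_eq, Bop_eq, Cop_eq, Dop_eq, blk_U, Fintype.sum_bool]
  refine ⟨?_, ?_, ?_, ?_⟩ <;> simp [Rm, cF] <;> module

theorem blk_B (N : ℕ) (u : ℂ) :
    blk (Bop (N + 1) u) true true = (aF u * bF u) • Bop N u ∧
    blk (Bop (N + 1) u) true false = 0 ∧
    blk (Bop (N + 1) u) false true = bF u • Aop N u + bF u • Dop N u ∧
    blk (Bop (N + 1) u) false false = (aF u * bF u) • Bop N u := by
  simp only [Aop_eq, Bop_eq, Cop_eq, Dop_eq, blk_U, Fintype.sum_bool]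
  refine ⟨?_, ?_, ?_, ?_⟩ <;> simp [Rm, cF] <;> module

theorem blk_C (N : ℕ) (u : ℂ) :
    blk (Cop (N + 1) u) true true = (aF u * bF u) • Cop N u ∧
    blk (Cop (N + 1) u) true false = bF u • Aop N u + bF u • Dop N u ∧
    blk (Cop (N + 1) u) false true = 0 ∧
    blk (Cop (N + 1) u) false false = (aF u * bF u) • Cop N u := by
  simp only [Aop_eq, Bop_eq, Cop_eq, Dop_eq, blk_U, Fintype.sum_bool]
  refine ⟨?_, ?_, ?_, ?_⟩ <;> simp [Rm, cF] <;> module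

theorem blk_D (N : ℕ) (u : ℂ) :
    blk (Dop (N + 1) u) true true = (bF u ^ 2) • Dop N u + Aop N u ∧
    blk (Dop (N + 1) u) true false = aF u • Bop N u ∧
    blk (Dop (N + 1) u) false true = aF u • Cop N u ∧
    blk (Dop (N + 1) u) false false = (aF u ^ 2) • Dop N u := by
  simp only [Aop_eq, Bop_eq, Cop_eq, Dop_eq, blk_U, Fintype.sum_bool]
  refine ⟨?_, ?_, ?_, ?_⟩ <;> simp [Rm, cF] <;> module

/-- `E^ε ⊗ 1`. -/
def Ee (n : ℕ) (e : Bool) : Matrix (Conf n) (Conf (n + 1)) ℂ :=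
  Matrix.of fun s t => if t (Fin.last n) = e ∧ (fun j => t (Fin.castSucc j)) = s then 1 else 0

theorem blk_Ee (n : ℕ) (e o i : Bool) :
    blk (Ee (n + 1) e) o i = if i = e then Ee n o else 0 := by
  ext s t
  by_cases h : i = e
  · simp only [blk, Ee, Matrix.of_apply, sn_last, sn_castSucc, h, if_true, true_and]
    congr 1
    obtain ⟨t, k, rfl⟩ := sn_surj t
    have : sn t k = sn s o ↔ t = s ∧ k = o := by simp [sn]
    simp only [sn_last, sn_castSucc]
    change (sn t k = sn s o) = _
    rw [this, and_comm]
  · simp [blk, Ee, sn_last, h]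

/-- `Q` including the trivial one-site case. -/
def Qg : (n : ℕ) → Matrix (Conf n) (Conf (n + 1)) ℂ
  | 0 => 0
  | n + 1 => Qop n

theorem blk_qMerge_last (n : ℕ) (o i : Bool) :
    blk (qMerge n (Fin.last n)) o i = if o = false ∧ i = true then Ee n true else 0 := by
  ext s t
  have key : (∀ j : Fin (n + 1), ((j : ℕ) < ((Fin.last n : Fin (n + 1)) : ℕ) →
        sn s o j = sn t i (Fin.castSucc j)) ∧
      (((Fin.last n : Fin (n + 1)) : ℕ) < (j : ℕ) → sn s o j = sn t i (Fin.succ j))) ↔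
      (fun j => t (Fin.castSucc j)) = s := by
    constructor
    · intro h
      funext j
      have := (h (Fin.castSucc j)).1 (by simp)
      simpa [sn_castSucc] using this.symm
    · rintro rfl j
      refine ⟨fun hj => ?_, fun hj => ?_⟩
      · induction j using Fin.lastCases with
        | last => simp at hj
        | cast j => simp [sn_castSucc]
      · have := j.2
        simp at hj
        omega
  simp only [blk, qMerge, Matrix.of_apply]
  simp only [key]
  simp only [sn_castSucc, sn_last, Fin.succ_last]
  by_cases h : o = false ∧ i = true
  · simp [h, Ee]
  · simp only [h, if_false]
    rw [if_neg]
    · rfl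
    · tauto

theorem blk_qMerge_castSucc (n : ℕ) (k : Fin (n + 1)) (o i : Bool) :
    blk (qMerge (n + 1) (Fin.castSucc k)) o i = if o = i then qMerge n k else 0 := by
  ext s t
  have key : (∀ j : Fin (n + 2), ((j : ℕ) < ((Fin.castSucc k : Fin (n + 2)) : ℕ) →
        sn s o j = sn t i (Fin.castSucc j)) ∧
      (((Fin.castSucc k : Fin (n + 2)) : ℕ) < (j : ℕ) → sn s o j = sn t i (Fin.succ j))) ↔
      o = i ∧ (∀ j : Fin (n + 1), ((j : ℕ) < (k : ℕ) → s j = t (Fin.castSucc j)) ∧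
      ((k : ℕ) < (j : ℕ) → s j = t (Fin.succ j))) := by
    constructor
    · intro h
      refine ⟨?_, fun j => ?_⟩
      · have := (h (Fin.last _)).2 (by simp; omega)
        simpa [sn_last, Fin.succ_last] using this
      · have := h (Fin.castSucc j)
        simpa [sn_castSucc, sn_succ_castSucc] using this
    · rintro ⟨rfl, h⟩ j
      induction j using Fin.lastCases with
      | last =>
        refine ⟨fun hj => ?_, fun hj => ?_⟩
        · have := k.2
          simp at hj
          omega
        · simp [sn_last, Fin.succ_last]
      | cast j =>
        simpa [sn_castSucc, sn_succ_castSucc] using h j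
  simp only [blk, qMerge, Matrix.of_apply]
  simp only [key]
  simp only [sn_castSucc, sn_succ_castSucc]
  by_cases h : o = i <;> simp [h]

theorem blk_Qg (n : ℕ) (o i : Bool) :
    blk (Qg (n + 1)) o i = (if o = i then Qg n else 0) +
      (if o = false ∧ i = true then (-1 : ℂ) ^ n • Ee n true else 0) := by
  have hs : ∀ (n : ℕ) (f : Fin (n + 1) → Matrix (Conf (n + 1)) (Conf (n + 2)) ℂ),
      blk (∑ k, f k) o i = ∑ k, blk (f k) o i := by
    intro n f
    ext s t
    simp [blk, Matrix.sum_apply]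
  cases n with
  | zero =>
    simp only [Qg, Qop, hs, blk_smul]
    have := blk_qMerge_last 0 o i
    simp only [Fin.last_zero] at this
    simp [this]
  | succ n =>
    simp only [Qg, Qop, hs, blk_smul]
    rw [Fin.sum_univ_castSucc]
    simp only [blk_qMerge_last, blk_qMerge_castSucc]
    by_cases h : o = i <;> simp [h]

theorem sinh_eta_ne : Complex.sinh ηc ≠ 0 ∧ 2 * Complex.cosh ηc = -1 := by
  have h : ηc = ((2 * Real.pi / 3 : ℝ) : ℂ) * Complex.I := by
    rw [ηc]
    push_cast
    ring
  have e : (2 * Real.pi / 3 : ℝ) = Real.pi - Real.pi / 3 := by ring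
  rw [h, Complex.sinh_mul_I, Complex.cosh_mul_I, ← Complex.ofReal_sin, ← Complex.ofReal_cos, e,
    Real.sin_pi_sub, Real.cos_pi_sub, Real.cos_pi_div_three, Real.sin_pi_div_three]
  constructor
  · simp
  · push_cast
    norm_num

theorem abd (u : ℂ) : dF u = - aF u - bF u ∧ aF u ^ 2 + aF u * bF u + bF u ^ 2 = 1 := by
  obtain ⟨h0, h1⟩ := sinh_eta_ne
  have h2 := Complex.cosh_sq_sub_sinh_sq u
  have h3 := Complex.cosh_sq_sub_sinh_sq ηc
  rw [dF, aF, bF, Complex.sinh_add, Complex.sinh_sub]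
  generalize Complex.sinh ηc = S at *
  generalize Complex.cosh ηc = C at *
  generalize Complex.sinh u = s at *
  generalize Complex.cosh u = c at *
  have hC : C = -1 / 2 := by linear_combination h1 / 2
  subst hC
  constructor
  · field_simp
    ring
  · field_simp
    grind

theorem eta_vals : aF ηc = -1 ∧ bF ηc = 1 ∧ dF ηc = 0 := by
  obtain ⟨h0, h1⟩ := sinh_eta_ne
  have hb : bF ηc = 1 := by rw [bF, div_self h0]
  have hd : dF ηc = 0 := by simp [dF]
  have := (abd ηc).1
  exact ⟨by rw [hb, hd] at this; linear_combination this, hb, hd⟩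

theorem bla_U_zero (u : ℂ) (α β : Bool) : bla (Umono 0 u) α β = Km u α β • 1 := by
  ext s t
  have : s = t := Subsingleton.elim _ _
  simp [bla, Umono, Tmono, Tbar, K0m, this]

theorem U_zero (u : ℂ) : Aop 0 u = dF u • 1 ∧ Bop 0 u = 0 ∧ Cop 0 u = 0 ∧ Dop 0 u = (- aF u) • 1 := by
  simp only [Aop_eq, Bop_eq, Cop_eq, Dop_eq, bla_U_zero]
  simp [Km]

/-- Action of `E^ε` on an operator, via blocks. -/
theorem Ee_mul (n : ℕ) (e : Bool) (X : Matrix (Conf (n + 1)) (Conf (n + 1)) ℂ) :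
    Ee n e * X = blk X e true * Ee n true + blk X e false * Ee n false := by
  have key : ∀ (Y : Matrix (Conf (n + 1)) (Conf (n + 1)) ℂ) s t, (Ee n e * Y) s t = Y (sn s e) t := by
    intro Y s t
    rw [Matrix.mul_apply, Finset.sum_eq_single (sn s e)]
    · simp [Ee, sn_last, sn_castSucc]
    · intro r _ hr
      obtain ⟨r, i, rfl⟩ := sn_surj r
      simp only [Ee, Matrix.of_apply, sn_last, sn_castSucc]
      rw [if_neg, zero_mul]
      rintro ⟨rfl, rfl⟩
      exact hr rfl
    · simp
  have key2 : ∀ (i : Bool) (Y : Matrix (Conf n) (Conf n) ℂ) s t k,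
      (Y * Ee n i) s (sn t k) = if k = i then Y s t else 0 := by
    intro i Y s t k
    rw [Matrix.mul_apply, Finset.sum_eq_single t]
    · simp [Ee, sn_last, sn_castSucc]
    · intro r _ hr
      simp only [Ee, Matrix.of_apply, sn_last, sn_castSucc]
      rw [if_neg, mul_zero]
      rintro ⟨rfl, h⟩
      exact hr h.symm
    · simp
  ext s t
  obtain ⟨t, k, rfl⟩ := sn_surj t
  rw [key, Matrix.add_apply, key2, key2]
  cases k <;> simp [blk]

theorem Q_comm (u : ℂ) (n : ℕ) :
    (Qg n * Aop (n + 1) u = dF u ^ 2 • (Aop n u * Qg n) +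
      ((-1 : ℂ) ^ (n + 1) * dF u) • (Bop n u * Ee n true)) ∧
    (Qg n * Bop (n + 1) u = dF u ^ 2 • (Bop n u * Qg n)) ∧
    (Qg n * Cop (n + 1) u = dF u ^ 2 • (Cop n u * Qg n) +
      ((-1 : ℂ) ^ (n + 1)) • (aF u • (Aop n u * Ee n true) + dF u • (Dop n u * Ee n true) +
        Bop n u * Ee n false)) ∧
    (Qg n * Dop (n + 1) u = dF u ^ 2 • (Dop n u * Qg n) +
      ((-1 : ℂ) ^ (n + 1) * bF u) • (Bop n u * Ee n true)) := by
  obtain ⟨h1, h2⟩ := abd u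
  induction n with
  | zero =>
    obtain ⟨hA, hB, hC, hD⟩ := U_zero u
    rw [hA, hB, hC, hD]
    simp [Qg, smul_smul, mul_comm]
  | succ n ih =>
    obtain ⟨iA, iB, iC, iD⟩ := ih
    obtain ⟨a1, a2, a3, a4⟩ := blk_A n u
    obtain ⟨b1, b2, b3, b4⟩ := blk_B n u
    obtain ⟨c1, c2, c3, c4⟩ := blk_C n u
    obtain ⟨d1, d2, d3, d4⟩ := blk_D n u
    obtain ⟨a1', a2', a3', a4'⟩ := blk_A (n + 1) u
    obtain ⟨b1', b2', b3', b4'⟩ := blk_B (n + 1) u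
    obtain ⟨c1', c2', c3', c4'⟩ := blk_C (n + 1) u
    obtain ⟨d1', d2', d3', d4'⟩ := blk_D (n + 1) u
    have ea := Ee_mul n true (Aop (n + 1) u)
    have eb := Ee_mul n true (Bop (n + 1) u)
    have ec := Ee_mul n true (Cop (n + 1) u)
    have ed := Ee_mul n true (Dop (n + 1) u)
    rw [a1, a2] at ea
    rw [b1, b2] at eb
    rw [c1, c2] at ec
    rw [d1, d2] at ed
    simp only [pow_succ (-1 : ℂ)] at *
    generalize hσ : (-1 : ℂ) ^ n = σ at *
    have hQ : ∀ o i, blk (Qg (n + 1)) o i = (if o = i then Qg n else 0) +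
      (if o = false ∧ i = true then σ • Ee n true else 0) := by
      intro o i
      rw [blk_Qg, hσ]
    refine ⟨?_, ?_, ?_, ?_⟩ <;> apply blk_ext <;> intro o i <;> cases o <;> cases i <;>
      simp only [blk_add, blk_smul, blk_mul, hQ, blk_Ee, a1, a2, a3, a4, b1, b2, b3, b4,
        c1, c2, c3, c4, d1, d2, d3, d4, a1', a2', a3', a4', b1', b2', b3', b4',
        c1', c2', c3', c4', d1', d2', d3', d4'] <;>
      simp only [if_true, reduceCtorEq, if_false, and_true, and_self, true_and, and_false,
        false_and, add_zero, zero_add, Matrix.zero_mul, Matrix.mul_zero, smul_zero,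
        Matrix.add_mul, Matrix.mul_add, Matrix.smul_mul, Matrix.mul_smul, iA, iB, iC, iD,
        ea, eb, ec, ed] <;>
      (try match_scalars) <;> grind

theorem vec_ext {n : ℕ} {v w : Conf (n + 1) → ℂ}
    (h : ∀ o, (fun s => v (sn s o)) = fun s => w (sn s o)) : v = w := by
  funext s
  obtain ⟨s, o, rfl⟩ := sn_surj s
  exact congrFun (h o) s

theorem Omega_sn (n : ℕ) (s : Conf n) (o : Bool) :
    Omega (n + 1) (sn s o) = if o = true then Omega n s else 0 := by
  unfold Omega
  cases o
  · have : ¬ ∀ j, sn s false j = true := fun h => by simpa [sn_last] using h (Fin.last n)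
    simp [this]
  · have : (∀ j, sn s true j = true) ↔ ∀ j, s j = true := by
      simp [Fin.forall_fin_succ', sn_last, sn_castSucc]
    simp [this]

theorem mulVec_Omega {m n : ℕ} (X : Matrix (Conf (m + 1)) (Conf (n + 1)) ℂ) (o : Bool) :
    (fun s => X.mulVec (Omega (n + 1)) (sn s o)) = (blk X o true).mulVec (Omega n) := by
  funext s
  simp [Matrix.mulVec, dotProduct, sum_sn, Omega_sn, blk]

theorem smul_sn {n : ℕ} (c : ℂ) (v : Conf (n + 1) → ℂ) (o : Bool) :
    (fun s => (c • v) (sn s o)) = c • (fun s => v (sn s o)) := rfl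

theorem ACD_Omega (n : ℕ) : (Aop n ηc).mulVec (Omega n) = 0 ∧ (Cop n ηc).mulVec (Omega n) = 0 ∧
    (Dop n ηc).mulVec (Omega n) = Omega n := by
  obtain ⟨ha, hb, hd⟩ := eta_vals
  induction n with
  | zero =>
    obtain ⟨hA, hB, hC, hD⟩ := U_zero ηc
    rw [hA, hC, hD, ha, hd]
    simp
  | succ n ih =>
    obtain ⟨iA, iC, iD⟩ := ih
    obtain ⟨a1, a2, a3, a4⟩ := blk_A n ηc
    obtain ⟨c1, c2, c3, c4⟩ := blk_C n ηc
    obtain ⟨d1, d2, d3, d4⟩ := blk_D n ηc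
    refine ⟨?_, ?_, ?_⟩ <;> apply vec_ext <;> intro o <;> rw [mulVec_Omega] <;> cases o <;>
      simp [a1, a3, c1, c3, d1, d3, Matrix.add_mulVec, Matrix.smul_mulVec, iA, iC, iD,
        Omega_sn, hb] <;> rfl

theorem Ee_Omega (n : ℕ) : (Ee n true).mulVec (Omega (n + 1)) = Omega n := by
  funext s
  simp only [Matrix.mulVec, dotProduct, sum_sn, Omega_sn, Ee, Matrix.of_apply, sn_last,
    sn_castSucc]
  simp

theorem Q_Omega (n : ℕ) : (Qg n).mulVec (Omega (n + 1)) =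
    (-1 : ℂ) ^ (n + 1) • (Bop n ηc).mulVec (Omega n) := by
  obtain ⟨ha, hb, hd⟩ := eta_vals
  induction n with
  | zero =>
    obtain ⟨hA, hB, hC, hD⟩ := U_zero ηc
    rw [hB]
    simp [Qg]
  | succ n ih =>
    obtain ⟨b1, b2, b3, b4⟩ := blk_B n ηc
    obtain ⟨iA, iC, iD⟩ := ACD_Omega n
    apply vec_ext
    intro o
    rw [smul_sn, mulVec_Omega, mulVec_Omega, blk_Qg]
    cases o
    · simp [b3, Matrix.add_mulVec, Matrix.smul_mulVec, iA, iD, hb, Ee_Omega, pow_succ]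
    · simp [b1, ha, hb, ih, pow_succ, Matrix.neg_mulVec]

theorem Q_prod (n : ℕ) (L : List ℂ) :
    Qop n * (L.map (Bop (n + 2))).prod =
      ((L.map fun x => dF x ^ 2).prod) • ((L.map (Bop (n + 1))).prod * Qop n) := by
  induction L with
  | nil => simp
  | cons x L ih =>
    have h := (Q_comm x (n + 1)).2.1
    simp only [Qg] at h
    simp only [List.map_cons, List.prod_cons]
    rw [← Matrix.mul_assoc, h, Matrix.smul_mul, Matrix.mul_assoc, ih, Matrix.mul_smul, smul_smul,
      Matrix.mul_assoc]

/-- action on off-shell Bethe states: for every `N = n+2 ≥ 2`, `m ≥ 0` and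
`λ₁,…,λ_m ∈ ℂ`,
`Q^(N) ℬ^(N)(λ₁)⋯ℬ^(N)(λ_m) Ω^(N)
  = (-1)^N (∏ᵢ d(λᵢ)²) ℬ^(N-1)(λ₁)⋯ℬ^(N-1)(λ_m) ℬ^(N-1)(η) Ω^(N-1)`;
in particular if some `λᵢ = η` then the left-hand side vanishes (`Qop n = Q^(n+2)`). -/
theorem Q_offshell_Bethe (n m : ℕ) (lam : Fin m → ℂ) :
    (Qop n).mulVec
        ((List.ofFn fun i => Bop (n + 2) (lam i)).prod.mulVec (Omega (n + 2)))
      = ((-1 : ℂ) ^ (n + 2) * ∏ i, dF (lam i) ^ 2) •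
          ((List.ofFn fun i => Bop (n + 1) (lam i)).prod * Bop (n + 1) ηc).mulVec
            (Omega (n + 1))
    ∧ ((∃ i, lam i = ηc) →
        (Qop n).mulVec
            ((List.ofFn fun i => Bop (n + 2) (lam i)).prod.mulVec (Omega (n + 2))) = 0) := by
  have main : (Qop n).mulVec
        ((List.ofFn fun i => Bop (n + 2) (lam i)).prod.mulVec (Omega (n + 2)))
      = ((-1 : ℂ) ^ (n + 2) * ∏ i, dF (lam i) ^ 2) •
          ((List.ofFn fun i => Bop (n + 1) (lam i)).prod * Bop (n + 1) ηc).mulVec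
            (Omega (n + 1)) := by
    have h := Q_prod n (List.ofFn lam)
    have h0 := Q_Omega (n + 1)
    simp only [Qg] at h0
    simp only [List.map_ofFn, Function.comp_def, List.prod_ofFn (f := fun i => dF (lam i) ^ 2)] at h
    rw [Matrix.mulVec_mulVec, h, Matrix.smul_mulVec, ← Matrix.mulVec_mulVec, h0,
      Matrix.mulVec_smul, Matrix.mulVec_mulVec, smul_smul, mul_comm]
  refine ⟨main, ?_⟩
  rintro ⟨i, hi⟩
  rw [main, Finset.prod_eq_zero (Finset.mem_univ i), mul_zero, zero_smul]
  rw [hi, eta_vals.2.2]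
  simp
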